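/- Stability of Schubert polynomials: for m < n and π ∈ S_m, the Schubert polynomial of π computed in S_m equals the Schubert polynomial of ι(π) computed in S_n, where ι: S_m ↪ S_n is the natural embedding fixing all points greater than m. -/

import Mathlib

open MvPolynomial Classical

/-- The action of the simple transposition `s_i` on polynomials, swapping `x_i` and `x_{i+1}`
(variables are 0-indexed: `X i` stands for `x_{i+1}`). -/
noncomputable def swapPoly (i : ℕ) (f : MvPolynomial ℕ ℤ) : MvPolynomial ℕ ℤ :=
  rename (Equiv.swap i (i + 1)) f

/-- The divided difference operator `∂_i f = (f - s_i f)/(x_i - x_{i+1})`. -/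
noncomputable def dd (i : ℕ) (f : MvPolynomial ℕ ℤ) : MvPolynomial ℕ ℤ :=
  if h : (X i - X (i + 1)) ∣ (f - swapPoly i f) then h.choose else 0

/-- Coxeter length of a permutation of `Fin n`, as the number of inversions. -/
def lenF (n : ℕ) (π : Equiv.Perm (Fin n)) : ℕ :=
  (Finset.univ.filter fun p : Fin n × Fin n => p.1 < p.2 ∧ π p.2 < π p.1).card

/-- The simple transposition `s_{i+1}` of `S_n` (0-indexed: swaps positions `i` and `i+1`),
junk value `1` if out of range. -/
def sFin (n i : ℕ) : Equiv.Perm (Fin n) :=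
  if h : i + 1 < n then Equiv.swap ⟨i, by omega⟩ ⟨i + 1, h⟩ else 1

/-- `S` is the family of Schubert polynomials of `S_n`: `S w₀ = x_1^{n-1} ⋯ x_{n-1}` for the
longest element `w₀`, and `S π = ∂_i S_{π s_i}` whenever `ℓ(π) < ℓ(π s_i)`. -/
def SchubertProp (n : ℕ) (S : Equiv.Perm (Fin n) → MvPolynomial ℕ ℤ) : Prop :=
  S Fin.revPerm = (∏ i ∈ Finset.range n, X i ^ (n - 1 - i)) ∧
  ∀ (π : Equiv.Perm (Fin n)) (i : ℕ), i + 1 < n →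
    lenF n π < lenF n (π * sFin n i) → S π = dd i (S (π * sFin n i))

/-!
The restriction to `S_m` of the Schubert family of `S_n` satisfies the defining recursion of
`S_m`, and this recursion has at most one solution, since right multiplication by simple
transpositions climbs from any permutation to `w₀`. Only the initial value needs an argument, and
one may take `n = m + 1`. In one-line notation `ι(w₀) = (m, …, 1, m+1)` arises from the longest
element `(m+1, m, …, 1)` of `S_{m+1}` by moving the entry `m+1` to the end with `s_1, …, s_m` in
turn; each `∂_j` then acts on a product `x_j f` with `s_j f = f`, so it strips one factor `x_j`.
-/

theorem dd_eq_of_sub_swapPoly_eq {i : ℕ} {f g : MvPolynomial ℕ ℤ}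
    (h : f - swapPoly i f = (X i - X (i + 1)) * g) : dd i f = g := by
  have hne : (X i - X (i + 1) : MvPolynomial ℕ ℤ) ≠ 0 :=
    sub_ne_zero.mpr (X_injective.ne i.succ_ne_self.symm)
  have hdvd : (X i - X (i + 1)) ∣ f - swapPoly i f := ⟨g, h⟩
  rw [dd, dif_pos hdvd]
  exact mul_left_cancel₀ hne (hdvd.choose_spec.symm.trans h)

theorem dd_X_mul {i : ℕ} {f : MvPolynomial ℕ ℤ} (hf : swapPoly i f = f) :
    dd i (X i * f) = f := by
  apply dd_eq_of_sub_swapPoly_eq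
  have hswap : swapPoly i (X i * f) = X (i + 1) * f := by
    rw [swapPoly] at hf ⊢
    rw [map_mul, hf, rename_X, Equiv.swap_apply_left]
  rw [hswap, sub_mul]

theorem swapPoly_prod_X_pow {i n : ℕ} (hi : i + 1 < n) {e : ℕ → ℕ} (he : e i = e (i + 1)) :
    swapPoly i (∏ p ∈ Finset.range n, X p ^ e p) = ∏ p ∈ Finset.range n, X p ^ e p := by
  rw [swapPoly, map_prod]
  refine Finset.prod_equiv (Equiv.swap i (i + 1)) (fun p => ?_) fun p _ => ?_
  · simp only [Finset.mem_range, Equiv.swap_apply_def]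
    split_ifs <;> omega
  · rw [map_pow, rename_X, Equiv.swap_apply_def]
    split_ifs with hp hp'
    exacts [by rw [hp, he], by rw [hp', he], rfl]

theorem dd_prod_X_pow {i n : ℕ} (hi : i + 1 < n) {e : ℕ → ℕ} (he : e i = e (i + 1) + 1) :
    dd i (∏ p ∈ Finset.range n, X p ^ e p) =
      ∏ p ∈ Finset.range n, X p ^ Function.update e i (e (i + 1)) p := by
  have hmem : i ∈ Finset.range n := Finset.mem_range.mpr (by omega)
  have hfactor : (∏ p ∈ Finset.range n, X p ^ e p : MvPolynomial ℕ ℤ) =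
      X i * ∏ p ∈ Finset.range n, X p ^ Function.update e i (e (i + 1)) p := by
    rw [← Finset.mul_prod_erase _ _ hmem, ← Finset.mul_prod_erase _ (fun p => X p ^ _) hmem,
      ← mul_assoc, Function.update_self, ← pow_succ', he]
    congr 1
    refine Finset.prod_congr rfl fun p hp => ?_
    rw [Function.update_of_ne (Finset.ne_of_mem_erase hp)]
  rw [hfactor]
  exact dd_X_mul (swapPoly_prod_X_pow hi (by simp))

section Ascents

variable {n i : ℕ}

theorem coe_sFin_apply (hi : i + 1 < n) (p : Fin n) :
    (sFin n i p : ℕ) = Equiv.swap i (i + 1) (p : ℕ) := by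
  rw [sFin, dif_pos hi, Equiv.swap_apply_def, Equiv.swap_apply_def]
  simp only [Fin.ext_iff]
  split_ifs <;> rfl

theorem sFin_apply_left (hi : i + 1 < n) : sFin n i ⟨i, Nat.lt_of_succ_lt hi⟩ = ⟨i + 1, hi⟩ :=
  Fin.ext (by rw [coe_sFin_apply hi, Equiv.swap_apply_left])

theorem sFin_apply_right (hi : i + 1 < n) : sFin n i ⟨i + 1, hi⟩ = ⟨i, Nat.lt_of_succ_lt hi⟩ :=
  Fin.ext (by rw [coe_sFin_apply hi, Equiv.swap_apply_right])

theorem sFin_symm (n i : ℕ) : (sFin n i).symm = sFin n i := by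
  rw [sFin]
  split_ifs
  exacts [Equiv.symm_swap _ _, rfl]

theorem sFin_mul_self (n i : ℕ) : sFin n i * sFin n i = 1 := by
  rw [sFin]
  split_ifs
  exacts [Equiv.swap_mul_self _ _, mul_one 1]

theorem lt_or_eq_of_sFin_lt_sFin (hi : i + 1 < n) {a b : Fin n} (h : sFin n i a < sFin n i b) :
    a < b ∨ a = ⟨i + 1, hi⟩ ∧ b = ⟨i, Nat.lt_of_succ_lt hi⟩ := by
  simp only [Fin.lt_def, coe_sFin_apply hi, Equiv.swap_apply_def] at h
  simp only [Fin.lt_def, Fin.ext_iff]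
  split_ifs at h <;> omega

theorem lenF_lt_lenF_mul_sFin {π : Equiv.Perm (Fin n)} (hi : i + 1 < n)
    (h : π ⟨i, Nat.lt_of_succ_lt hi⟩ < π ⟨i + 1, hi⟩) :
    lenF n π < lenF n (π * sFin n i) := by
  let s := sFin n i
  rw [lenF, lenF, ← Finset.card_map (s.prodCongr s).toEmbedding]
  refine Finset.card_lt_card (Finset.ssubset_iff_of_subset ?_ |>.mpr
    ⟨(⟨i, Nat.lt_of_succ_lt hi⟩, ⟨i + 1, hi⟩), ?_, ?_⟩)
  · rintro ⟨a, b⟩ hab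
    simp only [Finset.mem_map_equiv, Equiv.prodCongr_symm, Equiv.prodCongr_apply, Prod.map_apply,
      Finset.mem_filter_univ, s, sFin_symm] at hab
    rw [Finset.mem_filter_univ]
    obtain ⟨hs, hπ⟩ := hab
    obtain hlt | ⟨rfl, rfl⟩ := lt_or_eq_of_sFin_lt_sFin hi hs
    · exact ⟨hlt, hπ⟩
    · rw [sFin_apply_left hi, sFin_apply_right hi] at hπ
      exact absurd hπ h.asymm
  · rw [Finset.mem_filter_univ, Equiv.Perm.mul_apply, Equiv.Perm.mul_apply, sFin_apply_left hi,
      sFin_apply_right hi]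
    exact ⟨Fin.mk_lt_mk.mpr i.lt_succ_self, h⟩
  · simp [Finset.mem_map_equiv, s, sFin_symm, sFin_apply_left hi, sFin_apply_right hi]

theorem lenF_lt_lenF_mul_sFin_iff {π : Equiv.Perm (Fin n)} (hi : i + 1 < n) :
    lenF n π < lenF n (π * sFin n i) ↔ π ⟨i, Nat.lt_of_succ_lt hi⟩ < π ⟨i + 1, hi⟩ := by
  refine ⟨fun hlen => ?_, lenF_lt_lenF_mul_sFin hi⟩
  have hne : π ⟨i, Nat.lt_of_succ_lt hi⟩ ≠ π ⟨i + 1, hi⟩ := π.injective.ne (by simp)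
  by_contra hle
  have hdesc : lenF n (π * sFin n i) < lenF n (π * sFin n i * sFin n i) :=
    lenF_lt_lenF_mul_sFin hi (by
      rw [Equiv.Perm.mul_apply, Equiv.Perm.mul_apply, sFin_apply_left, sFin_apply_right]
      exact hne.symm.lt_of_le (not_lt.mp hle))
  rw [mul_assoc, sFin_mul_self, mul_one] at hdesc
  exact hlen.asymm hdesc

theorem eq_revPerm_of_strictAnti {π : Equiv.Perm (Fin n)} (hπ : StrictAnti π) :
    π = Fin.revPerm := by
  have hmono : StrictMono (Fin.rev ∘ π) := Fin.rev_strictAnti.comp hπ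
  have hid : Fin.rev ∘ π = id := (hmono.range_inj strictMono_id).mp <|
    (Fin.rev_surjective.comp π.surjective).range_eq.trans Set.range_id.symm
  ext p
  rw [Fin.revPerm_apply, ← Fin.rev_rev (π p)]
  exact congrArg (fun q => (Fin.rev q : ℕ)) (congrFun hid p)

theorem exists_ascent {π : Equiv.Perm (Fin n)} (hπ : π ≠ Fin.revPerm) :
    ∃ (i : ℕ) (hi : i + 1 < n), π ⟨i, Nat.lt_of_succ_lt hi⟩ < π ⟨i + 1, hi⟩ := by
  cases n with
  | zero => exact absurd (Subsingleton.elim _ _) hπ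
  | succ n =>
    contrapose! hπ
    refine eq_revPerm_of_strictAnti (Fin.strictAnti_iff_succ_lt.mpr fun j => ?_)
    have hle : π j.succ ≤ π j.castSucc := hπ j (Nat.succ_lt_succ j.isLt)
    exact hle.lt_of_ne (π.injective.ne Fin.castSucc_lt_succ.ne')

theorem perm_ascent_induction {P : Equiv.Perm (Fin n) → Prop} (revPerm : P Fin.revPerm)
    (ascent : ∀ π i, i + 1 < n → lenF n π < lenF n (π * sFin n i) → P (π * sFin n i) → P π)
    (π : Equiv.Perm (Fin n)) : P π := by
  by_contra hπ
  obtain ⟨τ, hτ, hmax⟩ :=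
    Set.exists_max_image {τ | ¬ P τ} (lenF n) (Set.toFinite _) ⟨π, hπ⟩
  obtain ⟨i, hi, hasc⟩ := exists_ascent (π := τ) fun h => hτ (h ▸ revPerm)
  have hlen := lenF_lt_lenF_mul_sFin hi hasc
  exact hτ (ascent τ i hi hlen (not_not.mp fun hP => (hmax _ hP).not_gt hlen))

end Ascents

theorem SchubertProp.unique {n : ℕ} {S S' : Equiv.Perm (Fin n) → MvPolynomial ℕ ℤ}
    (hS : SchubertProp n S) (hS' : SchubertProp n S') : S = S' := by
  funext π
  induction π using perm_ascent_induction with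
  | revPerm => rw [hS.1, hS'.1]
  | ascent π i hi hlen ih => rw [hS.2 π i hi hlen, hS'.2 π i hi hlen, ih]

section Embedding

variable {m n : ℕ}

/-- The natural embedding `ι : S_m ↪ S_n` for `m ≤ n`: the image of a permutation fixes all
points `≥ m` (points are 0-indexed). -/
noncomputable def permCastLE (h : m ≤ n) : Equiv.Perm (Fin m) →* Equiv.Perm (Fin n) :=
  Equiv.Perm.viaEmbeddingHom (Fin.castLEEmb h)

theorem permCastLE_apply_castLE (h : m ≤ n) (π : Equiv.Perm (Fin m)) (p : Fin m) :
    permCastLE h π (p.castLE h) = (π p).castLE h :=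
  Equiv.Perm.viaEmbedding_apply π (Fin.castLEEmb h) p

theorem permCastLE_apply_of_le (h : m ≤ n) (π : Equiv.Perm (Fin m)) {p : Fin n} (hp : m ≤ p) :
    permCastLE h π p = p :=
  Equiv.Perm.viaEmbedding_apply_of_notMem π (Fin.castLEEmb h) p (by
    rintro ⟨q, rfl⟩
    exact q.isLt.not_ge hp)

theorem coe_permCastLE_apply (h : m ≤ n) (π : Equiv.Perm (Fin m)) (p : Fin n) :
    (permCastLE h π p : ℕ) = if hp : (p : ℕ) < m then (π ⟨p, hp⟩ : ℕ) else p := by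
  split_ifs with hp
  · exact congrArg Fin.val (permCastLE_apply_castLE h π ⟨p, hp⟩)
  · rw [permCastLE_apply_of_le h π (not_lt.mp hp)]

theorem permCastLE_rfl (π : Equiv.Perm (Fin n)) : permCastLE le_rfl π = π := by
  ext p
  rw [coe_permCastLE_apply, dif_pos p.isLt]

theorem permCastLE_permCastLE {k : ℕ} (hkm : k ≤ m) (hmn : m ≤ n) (π : Equiv.Perm (Fin k)) :
    permCastLE hmn (permCastLE hkm π) = permCastLE (hkm.trans hmn) π := by
  ext p
  simp only [coe_permCastLE_apply]
  split_ifs <;> first | rfl | omega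

theorem permCastLE_sFin (h : m ≤ n) {i : ℕ} (hi : i + 1 < m) :
    permCastLE h (sFin m i) = sFin n i := by
  ext p
  rw [coe_permCastLE_apply, coe_sFin_apply (hi.trans_le h)]
  split_ifs with hp
  · rw [coe_sFin_apply hi]
  · rw [Equiv.swap_apply_of_ne_of_ne (by omega) (by omega)]

theorem lenF_permCastLE_lt (h : m ≤ n) {π : Equiv.Perm (Fin m)} {i : ℕ} (hi : i + 1 < m)
    (hlen : lenF m π < lenF m (π * sFin m i)) :
    lenF n (permCastLE h π) < lenF n (permCastLE h π * sFin n i) := by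
  rw [lenF_lt_lenF_mul_sFin_iff hi] at hlen
  refine lenF_lt_lenF_mul_sFin (hi.trans_le h) ?_
  rw [Fin.lt_def, coe_permCastLE_apply, coe_permCastLE_apply, dif_pos hi,
    dif_pos (Nat.lt_of_succ_lt hi)]
  exact hlen

end Embedding

section InitialValue

variable {n : ℕ}

theorem coe_cycleRange_apply (j p : Fin n) :
    (j.cycleRange p : ℕ) = if (p : ℕ) < j then (p : ℕ) + 1 else if (p : ℕ) = j then 0 else p := by
  obtain hlt | rfl | hgt := lt_trichotomy p j
  · rw [Fin.coe_cycleRange_of_lt hlt, if_pos (Fin.lt_def.mp hlt)]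
  · have : NeZero n := ⟨p.pos.ne'⟩
    rw [Fin.cycleRange_self, if_neg (lt_irrefl _), if_pos rfl, Fin.val_zero]
  · rw [Fin.cycleRange_of_gt hgt, if_neg (Fin.lt_def.not.mp hgt.asymm),
      if_neg (Fin.val_ne_of_ne hgt.ne')]

theorem cycleRange_succ_mul_sFin (j : Fin n) :
    j.succ.cycleRange * sFin (n + 1) j = j.castSucc.cycleRange := by
  ext p
  rw [Equiv.Perm.mul_apply, coe_cycleRange_apply, coe_cycleRange_apply,
    coe_sFin_apply (Nat.succ_lt_succ j.isLt), Equiv.swap_apply_def, Fin.val_succ, Fin.val_castSucc]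
  split_ifs <;> omega

theorem coe_revPerm_mul_cycleRange_apply (j p : Fin (n + 1)) :
    ((Fin.revPerm * j.cycleRange : Equiv.Perm (Fin (n + 1))) p : ℕ) =
      if (p : ℕ) < j then n - 1 - p else if (p : ℕ) = j then n else n - p := by
  rw [Equiv.Perm.mul_apply, Fin.revPerm_apply, Fin.val_rev, coe_cycleRange_apply]
  split_ifs <;> omega

theorem permCastLE_revPerm :
    permCastLE n.le_succ Fin.revPerm = Fin.revPerm * (Fin.last n).cycleRange := by
  ext p
  rw [coe_permCastLE_apply, coe_revPerm_mul_cycleRange_apply]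
  simp only [Fin.val_last, Fin.revPerm_apply, Fin.val_rev]
  split_ifs <;> omega

-- The exponents are the Lehmer code of `(n-1, …, n-j, n, n-j-1, …, 0)`.
theorem SchubertProp.apply_revPerm_mul_cycleRange
    {T : Equiv.Perm (Fin (n + 1)) → MvPolynomial ℕ ℤ} (hT : SchubertProp (n + 1) T)
    (j : Fin (n + 1)) :
    T (Fin.revPerm * j.cycleRange) =
      ∏ p ∈ Finset.range (n + 1), X p ^ (if p < j then n - 1 - p else n - p) := by
  induction j using Fin.induction with
  | zero => simpa using hT.1
  | succ j ih =>
    have hj : (j : ℕ) + 1 < n + 1 := Nat.succ_lt_succ j.isLt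
    have hlen : lenF (n + 1) (Fin.revPerm * j.succ.cycleRange) <
        lenF (n + 1) (Fin.revPerm * j.succ.cycleRange * sFin (n + 1) j) := by
      refine lenF_lt_lenF_mul_sFin hj ?_
      rw [Fin.lt_def, coe_revPerm_mul_cycleRange_apply, coe_revPerm_mul_cycleRange_apply]
      simp only [Fin.val_succ]
      split_ifs <;> omega
    rw [hT.2 _ j hj hlen, mul_assoc, cycleRange_succ_mul_sFin, ih, dd_prod_X_pow hj]
    · refine Finset.prod_congr rfl fun p _ => congrArg (X p ^ ·) ?_
      simp only [Function.update_apply, Fin.val_castSucc, Fin.val_succ]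
      split_ifs <;> omega
    · simp only [Fin.val_castSucc]
      split_ifs <;> omega

theorem SchubertProp.apply_permCastLE_revPerm
    {T : Equiv.Perm (Fin (n + 1)) → MvPolynomial ℕ ℤ} (hT : SchubertProp (n + 1) T) :
    T (permCastLE n.le_succ Fin.revPerm) = ∏ i ∈ Finset.range n, X i ^ (n - 1 - i) := by
  rw [permCastLE_revPerm, hT.apply_revPerm_mul_cycleRange, Finset.prod_range_succ, Fin.val_last,
    if_neg (lt_irrefl n), Nat.sub_self, pow_zero, mul_one]
  exact Finset.prod_congr rfl fun p hp => by rw [if_pos (Finset.mem_range.mp hp)]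

end InitialValue

theorem SchubertProp.comp_permCastLE_succ {n : ℕ}
    {T : Equiv.Perm (Fin (n + 1)) → MvPolynomial ℕ ℤ} (hT : SchubertProp (n + 1) T) :
    SchubertProp n (T ∘ permCastLE n.le_succ) := by
  refine ⟨hT.apply_permCastLE_revPerm, fun π i hi hlen => ?_⟩
  rw [Function.comp_apply, Function.comp_apply, map_mul, permCastLE_sFin _ hi]
  exact hT.2 _ i (by omega) (lenF_permCastLE_lt _ hi hlen)

theorem SchubertProp.comp_permCastLE {m n : ℕ} (h : m ≤ n)
    {T : Equiv.Perm (Fin n) → MvPolynomial ℕ ℤ} (hT : SchubertProp n T) :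
    SchubertProp m (T ∘ permCastLE h) := by
  induction n, h using Nat.le_induction with
  | base => simpa only [Function.comp_def, permCastLE_rfl] using hT
  | succ n hmn ih =>
    simpa only [Function.comp_def, permCastLE_permCastLE] using ih hT.comp_permCastLE_succ

/-- Stability of Schubert polynomials: for `m < n` and `π ∈ S_m`, the Schubert polynomial of
`π` computed in `S_m` equals that of its image `σ = ι(π) ∈ S_n` under the natural
embedding. -/
theorem schubert_stability (m n : ℕ) (hmn : m < n)
    (S : Equiv.Perm (Fin m) → MvPolynomial ℕ ℤ) (hS : SchubertProp m S)
    (T : Equiv.Perm (Fin n) → MvPolynomial ℕ ℤ) (hT : SchubertProp n T)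
    (π : Equiv.Perm (Fin m)) (σ : Equiv.Perm (Fin n))
    (hσ : ∀ j : Fin n, (σ j : ℕ) =
      if h : (j : ℕ) < m then (π ⟨j, h⟩ : ℕ) else (j : ℕ)) :
    S π = T σ := by
  have hσ_eq : σ = permCastLE hmn.le π :=
    Equiv.ext fun j => Fin.ext ((hσ j).trans (coe_permCastLE_apply hmn.le π j).symm)
  rw [hσ_eq]
  exact congrFun (hS.unique (hT.comp_permCastLE hmn.le)) π
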